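/- arXiv:2605.22451 — 2 statements merged into one kernel-verified Lean document; each statement's English description precedes it below -/
import Mathlib

section
/- In the setting of finitely many positive-valued continuous functions fᵢ : ℝⁿ → ℝ (i ∈ I, I finite nonempty) with epigraphs Lᵢ, and a nonempty closed K ⊆ ℝⁿ × ℝ containing a point with nonpositive last coordinate and disjoint from each Lᵢ: if Gᵢ⁻(x) = Gᵢ⁺(x) for every i ∈ I at a point x ∈ ℝⁿ, then G_min⁺(x) = G_min⁻(x), where G_min± are the upper/lower equidistant functions associated with K and L := ∪_{i∈I} Lᵢ. Consequently, if for every i the equidistant set of K and Lᵢ is the graph of a function, then so is the equidistant set of K and L. -/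
open Metric Set

noncomputable section

/-- `ℝⁿ × ℝ` with the Euclidean (ℓ²) metric. -/
abbrev EucProd (n : ℕ) := WithLp 2 (EuclideanSpace ℝ (Fin n) × ℝ)

/-- The point of `ℝⁿ × ℝ` with first component `x` and last coordinate `y`. -/
def pt {n : ℕ} (x : EuclideanSpace ℝ (Fin n)) (y : ℝ) : EucProd n :=
  (WithLp.equiv 2 (EuclideanSpace ℝ (Fin n) × ℝ)).symm (x, y)

/-- The epigraph of `f : ℝⁿ → ℝ`, viewed as a subset of `ℝⁿ × ℝ`. -/
def epigraph {n : ℕ} (f : EuclideanSpace ℝ (Fin n) → ℝ) : Set (EucProd n) :=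
  {p | f ((WithLp.equiv 2 (EuclideanSpace ℝ (Fin n) × ℝ)) p).1 ≤
      ((WithLp.equiv 2 (EuclideanSpace ℝ (Fin n) × ℝ)) p).2}

/-- The upper equidistant function `G⁺` associated with the focal sets `K` and `L`:
`G⁺(x) = sup {y | d((x,y),K) = d((x,y),L)}`. -/
def Gplus {n : ℕ} (K L : Set (EucProd n)) (x : EuclideanSpace ℝ (Fin n)) : ℝ :=
  sSup {y : ℝ | Metric.infDist (pt x y) K = Metric.infDist (pt x y) L}

/-- The lower equidistant function `G⁻` associated with the focal sets `K` and `L`: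
`G⁻(x) = inf {y | d((x,y),K) = d((x,y),L)}`. -/
def Gminus {n : ℕ} (K L : Set (EucProd n)) (x : EuclideanSpace ℝ (Fin n)) : ℝ :=
  sInf {y : ℝ | Metric.infDist (pt x y) K = Metric.infDist (pt x y) L}


theorem sign_of_unique {a b : ℝ → ℝ} (ha : Continuous a) (hb : Continuous b)
    (A B : ℝ) (hA : ∀ y ≤ A, a y < b y) (hB : ∀ y ≥ B, b y < a y)
    (h : sInf {y : ℝ | a y = b y} = sSup {y : ℝ | a y = b y} ∨ ∃! y, a y = b y) :
    ∃ c, a c = b c ∧ (∀ y < c, a y < b y) ∧ (∀ y > c, b y < a y) := by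
  have ivt : ∀ u v, u ≤ v → ((a u ≤ b u ∧ b v ≤ a v) ∨ (b u ≤ a u ∧ a v ≤ b v)) →
      ∃ y ∈ Icc u v, a y = b y := by
    rintro u v huv (⟨h1, h2⟩ | ⟨h1, h2⟩)
    · obtain ⟨y, hy, h⟩ := intermediate_value_Icc huv (f := fun y => a y - b y)
        (by fun_prop) (show (0 : ℝ) ∈ _ from ⟨by simpa using h1, by simpa using h2⟩)
      exact ⟨y, hy, by simpa [sub_eq_zero] using h⟩
    · obtain ⟨y, hy, h⟩ := intermediate_value_Icc' huv (f := fun y => a y - b y)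
        (by fun_prop) (show (0 : ℝ) ∈ _ from ⟨by simpa using h2, by simpa using h1⟩)
      exact ⟨y, hy, by simpa [sub_eq_zero] using h⟩
  have hlo : ∀ y, a y = b y → A ≤ y := fun y hy => by
    by_contra hc
    exact absurd (hA y (by linarith)) (by simp [hy])
  have hhi : ∀ y, a y = b y → y ≤ B := fun y hy => by
    by_contra hc
    exact absurd (hB y (by linarith)) (by simp [hy])
  have huniq : ∀ y z, a y = b y → a z = b z → y = z := by
    rcases h with h | h
    · have key : ∀ y, a y = b y → y = sInf {y : ℝ | a y = b y} := fun y hy =>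
        le_antisymm (h ▸ le_csSup ⟨B, fun z hz => hhi z hz⟩ hy)
          (csInf_le ⟨A, fun z hz => hlo z hz⟩ hy)
      intro y z hy hz
      rw [key y hy, ← key z hz]
    · intro y z hy hz
      exact h.unique hy hz
  have hAB : A ≤ B := by
    by_contra hc
    linarith [hA A le_rfl, hB A (by linarith)]
  obtain ⟨c, -, hc⟩ := ivt A B hAB (Or.inl ⟨(hA A le_rfl).le, (hB B le_rfl).le⟩)
  refine ⟨c, hc, fun y hy => ?_, fun y hy => ?_⟩
  · by_contra hn
    obtain ⟨z, hz, hz'⟩ := ivt (min A y) y (min_le_right _ _)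
      (Or.inl ⟨(hA _ (min_le_left _ _)).le, not_lt.1 hn⟩)
    have := huniq z c hz' hc
    linarith [hz.2]
  · by_contra hn
    obtain ⟨z, hz, hz'⟩ := ivt y (max B y) (le_max_right _ _)
      (Or.inl ⟨not_lt.1 hn, (hB _ (le_max_left _ _)).le⟩)
    have := huniq z c hz' hc
    linarith [hz.1]

theorem dist_pt {n : ℕ} (x : EuclideanSpace ℝ (Fin n)) (y : ℝ) (p : EucProd n) :
    dist (pt x y) p = Real.sqrt (dist x p.fst ^ 2 + (y - p.snd) ^ 2) := by
  rw [WithLp.prod_dist_eq_of_L2]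
  simp [pt, Real.dist_eq]

theorem continuous_pt {n : ℕ} (x : EuclideanSpace ℝ (Fin n)) : Continuous (pt x) := by
  refine (LipschitzWith.of_dist_le_mul (K := 1) fun y z => ?_).continuous
  rw [dist_pt]
  simp [pt, Real.dist_eq, Real.sqrt_sq_eq_abs]

theorem pt_mem_epigraph {n : ℕ} {f : EuclideanSpace ℝ (Fin n) → ℝ}
    {x : EuclideanSpace ℝ (Fin n)} {y : ℝ} (h : f x ≤ y) : pt x y ∈ epigraph f := h

theorem lower_bound {n : ℕ} (f : EuclideanSpace ℝ (Fin n) → ℝ)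
    (hf : Continuous f) (hfpos : ∀ x, 0 < f x) (K : Set (EucProd n))
    (x₀ : EuclideanSpace ℝ (Fin n)) (y₀ : ℝ) (hx₀ : pt x₀ y₀ ∈ K) (hy₀ : y₀ ≤ 0)
    (x : EuclideanSpace ℝ (Fin n)) :
    ∃ A : ℝ, ∀ y ≤ A, infDist (pt x y) K < infDist (pt x y) (epigraph f) := by
  have ha : 0 ≤ dist x x₀ := dist_nonneg
  obtain ⟨z, -, hz⟩ := (isCompact_closedBall x (dist x x₀ + 1)).exists_isMinOn
    ⟨x, mem_closedBall_self (by linarith)⟩ hf.continuousOn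
  have hδ := hfpos z
  refine ⟨min y₀ (-(dist x x₀ ^ 2 / (2 * f z))), fun y hy => ?_⟩
  have h1 : y ≤ y₀ := hy.trans (min_le_left _ _)
  have h2 : y ≤ -(dist x x₀ ^ 2 / (2 * f z)) := hy.trans (min_le_right _ _)
  have h3 : dist x x₀ ^ 2 ≤ -y * (2 * f z) := by
    rw [← div_le_iff₀ (by positivity)]; linarith
  have hK : infDist (pt x y) K ≤ Real.sqrt (dist x x₀ ^ 2 + y ^ 2) := by
    refine (infDist_le_dist_of_mem hx₀).trans ?_
    rw [dist_pt]
    apply Real.sqrt_le_sqrt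
    simp only [pt]
    show dist x x₀ ^ 2 + (y - y₀) ^ 2 ≤ _
    nlinarith
  have hL : min (f z - y) (Real.sqrt ((dist x x₀ + 1) ^ 2 + y ^ 2))
      ≤ infDist (pt x y) (epigraph f) := by
    rw [le_infDist ⟨_, pt_mem_epigraph (le_refl (f x))⟩]
    intro p hp
    have hp' : f p.fst ≤ p.snd := hp
    have hpos := hfpos p.fst
    rw [dist_pt]
    by_cases hc : dist x p.fst ≤ dist x x₀ + 1
    · refine (min_le_left _ _).trans (Real.le_sqrt_of_sq_le ?_)
      have : f z ≤ f p.fst := hz (by rwa [mem_closedBall, dist_comm])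
      nlinarith [sq_nonneg (dist x p.fst)]
    · refine (min_le_right _ _).trans (Real.sqrt_le_sqrt ?_)
      push Not at hc
      nlinarith
  refine hK.trans_lt (lt_of_lt_of_le (lt_min ?_ ?_) hL)
  · rw [Real.sqrt_lt' (by linarith)]
    nlinarith
  · apply Real.sqrt_lt_sqrt (by positivity)
    nlinarith

theorem stmt7 {n : ℕ} (I : Type) [Fintype I] [Nonempty I]
    (f : I → EuclideanSpace ℝ (Fin n) → ℝ)
    (hf : ∀ i, Continuous (f i)) (hfpos : ∀ i x, 0 < f i x)
    (L : I → Set (EucProd n)) (hL : ∀ i, L i = epigraph (f i))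
    (K : Set (EucProd n)) (hKcl : IsClosed K) (hKne : K.Nonempty)
    (x₀ : EuclideanSpace ℝ (Fin n)) (y₀ : ℝ) (hx₀ : pt x₀ y₀ ∈ K) (hy₀ : y₀ ≤ 0)
    (hdisj : ∀ i, K ∩ L i = ∅)
    (Lmin : Set (EucProd n)) (hLmin : Lmin = ⋃ i, L i) :
    (∀ x : EuclideanSpace ℝ (Fin n),
        (∀ i, Gminus K (L i) x = Gplus K (L i) x) →
          Gplus K Lmin x = Gminus K Lmin x) ∧
      ((∀ i, ∀ x : EuclideanSpace ℝ (Fin n),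
          ∃! y : ℝ, Metric.infDist (pt x y) K = Metric.infDist (pt x y) (L i)) →
        ∀ x : EuclideanSpace ℝ (Fin n),
          ∃! y : ℝ, Metric.infDist (pt x y) K = Metric.infDist (pt x y) Lmin) := by
  have hne : ∀ i, (L i).Nonempty := fun i => by
    rw [hL]; exact ⟨_, pt_mem_epigraph (le_refl (f i x₀))⟩
  have key : ∀ x : EuclideanSpace ℝ (Fin n),
      (∀ i, Gminus K (L i) x = Gplus K (L i) x ∨
        ∃! y : ℝ, Metric.infDist (pt x y) K = Metric.infDist (pt x y) (L i)) →
      ∃! y : ℝ, Metric.infDist (pt x y) K = Metric.infDist (pt x y) Lmin := by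
    intro x h
    have hc : ∀ i, ∃ c, infDist (pt x c) K = infDist (pt x c) (L i) ∧
        (∀ y < c, infDist (pt x y) K < infDist (pt x y) (L i)) ∧
        (∀ y > c, infDist (pt x y) (L i) < infDist (pt x y) K) := by
      intro i
      obtain ⟨A, hA⟩ := lower_bound (f i) (hf i) (hfpos i) K x₀ y₀ hx₀ hy₀ x
      refine sign_of_unique (a := fun y => infDist (pt x y) K)
        (b := fun y => infDist (pt x y) (L i))
        ((continuous_infDist_pt K).comp (continuous_pt x))
        ((continuous_infDist_pt (L i)).comp (continuous_pt x)) A (f i x)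
        (by rw [hL]; exact hA) ?_ (h i)
      intro y hy
      have hm : pt x y ∈ L i := by rw [hL]; exact pt_mem_epigraph hy
      have hnK : pt x y ∉ K := fun hk => by
        have : pt x y ∈ K ∩ L i := ⟨hk, hm⟩
        simp [hdisj i] at this
      show infDist (pt x y) (L i) < infDist (pt x y) K
      rw [infDist_zero_of_mem hm]
      exact (hKcl.notMem_iff_infDist_pos hKne).1 hnK
    choose c hc0 hc1 hc2 using hc
    have hle : ∀ p i, infDist p Lmin ≤ infDist p (L i) := fun p i =>
      infDist_le_infDist_of_subset (by rw [hLmin]; exact subset_iUnion L i) (hne i)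
    have hex : ∀ p, ∃ i, infDist p Lmin = infDist p (L i) := by
      intro p
      obtain ⟨i, hi⟩ := Finite.exists_min fun i => infDist p (L i)
      refine ⟨i, le_antisymm (hle p i) ?_⟩
      have hn : Lmin.Nonempty := by
        rw [hLmin]; exact (hne i).mono (subset_iUnion L i)
      rw [le_infDist hn]
      intro q hq
      rw [hLmin] at hq
      obtain ⟨j, hj⟩ := mem_iUnion.1 hq
      exact (hi j).trans (infDist_le_dist_of_mem hj)
    obtain ⟨j, hj⟩ := Finite.exists_min c
    refine ⟨c j, ?_, ?_⟩
    · obtain ⟨i, hi⟩ := hex (pt x (c j))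
      refine le_antisymm ?_ ((hle _ j).trans (hc0 j).ge)
      rw [hi]
      rcases (hj i).lt_or_eq with hlt | heq
      · exact (hc1 i _ hlt).le
      · rw [heq]; exact (hc0 i).le
    · intro y hy
      obtain ⟨i, hi⟩ := hex (pt x y)
      have hyi : y = c i := by
        rcases lt_trichotomy y (c i) with h | h | h
        · linarith [hc1 i y h]
        · exact h
        · linarith [hc2 i y h]
      by_contra hcon
      have hgt : y > c j := lt_of_le_of_ne (hyi ▸ hj i) (Ne.symm hcon)
      linarith [hc2 j y hgt, hle (pt x y) j]
  refine ⟨fun x h => ?_, fun h x => key x fun i => Or.inr (h i x)⟩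
  obtain ⟨c, hc, hu⟩ := key x fun i => Or.inl (h i)
  have hs : {y : ℝ | infDist (pt x y) K = infDist (pt x y) Lmin} = {c} := by
    ext y
    constructor
    · exact fun hy => hu y hy
    · rintro rfl; exact hc
  simp only [Gplus, Gminus, hs, csSup_singleton, csInf_singleton]

end
end

section
/- Let f : ℝⁿ → ℝ be a continuous positive-valued function with epigraph L, let R > 0, and let K ⊆ ℝⁿ × ℝ be the closed ball of radius R centered at the origin; assume |x|² + f(x)² > R² for all x ∈ ℝⁿ (so K ∩ L = ∅). Then for every x ∈ ℝⁿ there is exactly one y ∈ ℝ with d((x,y),K) = d((x,y),L); i.e., the equidistant set {K=L} is the graph of a function over ℝⁿ. -/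
open Metric Set

noncomputable section

lemma aux_dist_sq {n : ℕ} (x u : EuclideanSpace ℝ (Fin n)) (y v : ℝ) :
    dist (pt x y) (pt u v) ^ 2 = ‖x - u‖ ^ 2 + (y - v) ^ 2 := by
  rw [dist_eq_norm, WithLp.prod_norm_sq_eq_of_L2]
  simp [pt]

lemma aux_norm_sq {n : ℕ} (x : EuclideanSpace ℝ (Fin n)) (y : ℝ) :
    ‖pt x y‖ ^ 2 = ‖x‖ ^ 2 + y ^ 2 := by
  rw [WithLp.prod_norm_sq_eq_of_L2]
  simp [pt]

lemma aux_mem {n : ℕ} (f : EuclideanSpace ℝ (Fin n) → ℝ) (x : EuclideanSpace ℝ (Fin n)) (y : ℝ) :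
    pt x y ∈ epigraph f ↔ f x ≤ y := Iff.rfl

lemma aux_surj {n : ℕ} (p : EucProd n) : ∃ x y, p = pt x y :=
  ⟨p.fst, p.snd, rfl⟩

lemma aux_cont {n : ℕ} (x : EuclideanSpace ℝ (Fin n)) : Continuous (fun y : ℝ => pt x y) := by
  have : Continuous (fun y : ℝ => (WithLp.toLp 2 (x, y) : EucProd n)) := by fun_prop
  exact this

lemma aux_closed {n : ℕ} (f : EuclideanSpace ℝ (Fin n) → ℝ) (hf : Continuous f) :
    IsClosed (epigraph f) := by
  have : IsClosed {p : EucProd n | f p.fst ≤ p.snd} := by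
    apply isClosed_le
    · exact hf.comp (by fun_prop)
    · fun_prop
  exact this

lemma aux_le {n : ℕ} (p : EucProd n) (R : ℝ) (hR : 0 < R) (hp : R ≤ ‖p‖) :
    infDist p (closedBall 0 R) ≤ ‖p‖ - R := by
  have hp0 : 0 < ‖p‖ := hR.trans_le hp
  have hm : (R / ‖p‖) • p ∈ closedBall (0 : EucProd n) R := by
    rw [mem_closedBall_zero_iff, norm_smul, Real.norm_of_nonneg (by positivity)]
    field_simp; rfl
  refine (infDist_le_dist_of_mem hm).trans ?_
  have h1 : 0 ≤ 1 - R / ‖p‖ := by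
    rw [sub_nonneg, div_le_one hp0]; exact hp
  have : p - (R / ‖p‖) • p = (1 - R / ‖p‖) • p := by rw [sub_smul, one_smul]
  rw [dist_eq_norm, this, norm_smul, Real.norm_of_nonneg h1]
  apply le_of_eq; field_simp

lemma aux_ge {n : ℕ} (p : EucProd n) (R : ℝ) (hR : 0 < R) :
    ‖p‖ - R ≤ infDist p (closedBall 0 R) := by
  rw [le_infDist ⟨0, by simp [hR.le]⟩]
  intro q hq
  rw [mem_closedBall_zero_iff] at hq
  have := norm_sub_norm_le p q
  rw [dist_eq_norm]; linarith

lemma aux_alg (N1 N2 M1 M2 R s t v A a : ℝ) (hR : 0 < R) (hN1 : 0 ≤ N1) (hN2 : 0 ≤ N2)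
    (hM1 : 0 ≤ M1) (hM2 : 0 ≤ M2) (hv : 0 < v) (hs : s < t) (ht : t ≤ 0)
    (n1 : N1 ^ 2 = A + s ^ 2) (n2 : N2 ^ 2 = A + t ^ 2)
    (m1 : M1 ^ 2 = a + (s - v) ^ 2) (m2 : M2 ^ 2 = a + (t - v) ^ 2)
    (h : M1 = N1 - R) : M2 < N2 - R := by
  have hvt : 0 < v * (t - s) := mul_pos hv (sub_pos.2 hs)
  have h2 : M2 < N2 := by
    have : M1 ^ 2 ≤ N1 ^ 2 := pow_le_pow_left₀ hM1 (by linarith) 2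
    apply lt_of_pow_lt_pow_left₀ 2 hN2
    nlinarith
  by_contra hc
  push Not at hc
  have h3 : M1 - M2 ≤ N1 - N2 := by linarith
  have h4 : (N1 - N2) * (N1 + N2) < (M1 - M2) * (M1 + M2) := by nlinarith
  have h5 : 0 ≤ N1 - N2 := by
    have : N2 ≤ N1 := by
      refine (pow_le_pow_iff_left₀ hN2 hN1 two_ne_zero).1 ?_
      nlinarith
    linarith
  have h6 : (M1 - M2) * (M1 + M2) ≤ (N1 - N2) * (M1 + M2) :=
    mul_le_mul_of_nonneg_right h3 (by linarith)
  have h7 : (N1 - N2) * (M1 + M2) ≤ (N1 - N2) * (N1 + N2) :=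
    mul_le_mul_of_nonneg_left (by linarith) h5
  linarith

lemma aux_anti {n : ℕ} (f : EuclideanSpace ℝ (Fin n) → ℝ) (x : EuclideanSpace ℝ (Fin n))
    (y z : ℝ) (h : y ≤ z) : infDist (pt x z) (epigraph f) ≤ infDist (pt x y) (epigraph f) := by
  rw [le_infDist ⟨pt 0 (f 0), (aux_mem f _ _).2 le_rfl⟩]
  intro q hq
  obtain ⟨u, v, rfl⟩ := aux_surj q
  rw [aux_mem] at hq
  have hm : pt u (v + (z - y)) ∈ epigraph f := (aux_mem f _ _).2 (by linarith)
  refine (infDist_le_dist_of_mem hm).trans ?_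
  refine (pow_le_pow_iff_left₀ dist_nonneg dist_nonneg two_ne_zero).1 ?_
  rw [aux_dist_sq, aux_dist_sq]
  apply le_of_eq; ring

lemma aux_key {n : ℕ} (f : EuclideanSpace ℝ (Fin n) → ℝ) (hf : Continuous f)
    (hfpos : ∀ x, 0 < f x) (R : ℝ) (hR : 0 < R)
    (hout : ∀ x : EuclideanSpace ℝ (Fin n), R ^ 2 < ‖x‖ ^ 2 + f x ^ 2)
    (x : EuclideanSpace ℝ (Fin n)) (y z : ℝ) (hyz : y < z)
    (he : infDist (pt x y) (closedBall 0 R) = infDist (pt x y) (epigraph f)) :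
    infDist (pt x z) (epigraph f) < infDist (pt x z) (closedBall 0 R) := by
  have hne : (epigraph f).Nonempty := ⟨pt 0 (f 0), (aux_mem f _ _).2 le_rfl⟩
  have hN : R < ‖pt x y‖ := by
    by_contra hc
    push Not at hc
    have hm : pt x y ∈ closedBall (0 : EucProd n) R := mem_closedBall_zero_iff.2 hc
    rw [infDist_zero_of_mem hm] at he
    have hm2 := ((aux_closed f hf).mem_iff_infDist_zero hne).2 he.symm
    rw [aux_mem] at hm2
    have h1 := aux_norm_sq x y
    have h2 := hout x
    have h3 := hfpos x
    have h4 : ‖pt x y‖ ^ 2 ≤ R ^ 2 := pow_le_pow_left₀ (norm_nonneg _) hc 2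
    nlinarith
  have hk : infDist (pt x y) (closedBall 0 R) = ‖pt x y‖ - R :=
    le_antisymm (aux_le _ R hR hN.le) (aux_ge _ R hR)
  have hneg : ∀ t, y < t → t ≤ 0 → infDist (pt x t) (epigraph f) < ‖pt x t‖ - R := by
    intro t hyt ht
    obtain ⟨q, hq, hd⟩ := (aux_closed f hf).exists_infDist_eq_dist hne (pt x y)
    obtain ⟨u, v, rfl⟩ := aux_surj q
    refine (infDist_le_dist_of_mem hq).trans_lt ?_
    rw [aux_mem] at hq
    exact aux_alg ‖pt x y‖ ‖pt x t‖ _ _ R y t v _ _ hR (norm_nonneg _) (norm_nonneg _)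
      dist_nonneg dist_nonneg ((hfpos u).trans_le hq) hyt ht (aux_norm_sq x y) (aux_norm_sq x t)
      (aux_dist_sq x u y v) (aux_dist_sq x u t v) (by rw [← hd, ← he, hk])
  refine lt_of_lt_of_le ?_ (aux_ge _ R hR)
  have mono : ∀ a b, 0 ≤ a → a < b → ‖pt x a‖ < ‖pt x b‖ := by
    intro a b ha hab
    apply lt_of_pow_lt_pow_left₀ 2 (norm_nonneg _)
    rw [aux_norm_sq, aux_norm_sq]; nlinarith
  rcases le_or_gt 0 y with h0 | h0
  · have := mono y z h0 hyz
    have := aux_anti f x y z hyz.le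
    linarith
  · rcases le_or_gt z 0 with hz | hz
    · exact hneg z hyz hz
    · have := hneg 0 h0 le_rfl
      have := mono 0 z le_rfl hz
      have := aux_anti f x 0 z hz.le
      linarith

theorem stmt11 {n : ℕ} (f : EuclideanSpace ℝ (Fin n) → ℝ) (hf : Continuous f)
    (hfpos : ∀ x, 0 < f x)
    (L : Set (EucProd n)) (hL : L = epigraph f)
    (R : ℝ) (hR : 0 < R)
    (K : Set (EucProd n)) (hK : K = Metric.closedBall (0 : EucProd n) R)
    (hout : ∀ x : EuclideanSpace ℝ (Fin n), R ^ 2 < ‖x‖ ^ 2 + f x ^ 2) :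
    ∀ x : EuclideanSpace ℝ (Fin n),
      ∃! y : ℝ, Metric.infDist (pt x y) K = Metric.infDist (pt x y) L := by
  subst hL hK
  intro x
  have hne : (epigraph f).Nonempty := ⟨pt 0 (f 0), (aux_mem f _ _).2 le_rfl⟩
  have hex : ∃ y : ℝ, infDist (pt x y) (closedBall 0 R) = infDist (pt x y) (epigraph f) := by
    set t : ℝ := ‖x‖ ^ 2 / (2 * R) with ht
    have ht0 : 0 ≤ t := by positivity
    have htR : 2 * R * t = ‖x‖ ^ 2 := by rw [ht]; field_simp
    have hc1 : Continuous fun y : ℝ => infDist (pt x y) (closedBall (0 : EucProd n) R) :=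
      (continuous_infDist_pt _).comp (aux_cont x)
    have hc2 : Continuous fun y : ℝ => infDist (pt x y) (epigraph f) :=
      (continuous_infDist_pt _).comp (aux_cont x)
    have hlow : infDist (pt x (-t)) (closedBall 0 R) ≤ infDist (pt x (-t)) (epigraph f) := by
      have h1 : t ≤ infDist (pt x (-t)) (epigraph f) := by
        rw [le_infDist hne]
        intro q hq
        obtain ⟨u, v, rfl⟩ := aux_surj q
        rw [aux_mem] at hq
        have hv := (hfpos u).trans_le hq
        refine (pow_le_pow_iff_left₀ ht0 dist_nonneg two_ne_zero).1 ?_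
        rw [aux_dist_sq]
        nlinarith [sq_nonneg ‖x - u‖]
      refine le_trans ?_ h1
      rcases le_or_gt R ‖pt x (-t)‖ with h | h
      · refine (aux_le _ R hR h).trans ?_
        have : ‖pt x (-t)‖ ≤ t + R := by
          refine (pow_le_pow_iff_left₀ (norm_nonneg _) (by linarith) two_ne_zero).1 ?_
          rw [aux_norm_sq]; nlinarith
        linarith
      · rw [infDist_zero_of_mem (mem_closedBall_zero_iff.2 h.le)]; exact ht0
    have hhigh : infDist (pt x (f x)) (epigraph f) ≤ infDist (pt x (f x)) (closedBall 0 R) := by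
      rw [infDist_zero_of_mem ((aux_mem f _ _).2 le_rfl)]
      exact infDist_nonneg
    obtain ⟨y, hy⟩ := intermediate_value_univ₂ hc1 hc2 hlow hhigh
    exact ⟨y, hy⟩
  obtain ⟨y, hy⟩ := hex
  refine ⟨y, hy, ?_⟩
  intro z hz
  rcases lt_trichotomy z y with h | h | h
  · exact absurd hy (aux_key f hf hfpos R hR hout x z y h hz).ne'
  · exact h
  · exact absurd hz (aux_key f hf hfpos R hR hout x y z h hy).ne'

end
end
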